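/- Let R be a commutative Noetherian local ring, let M, N be finitely generated R-modules, and let n ≥ 1 be an integer. If Ext^i_R(Tr M, N) = 0 for all i = 1, …, n, then depth_R(M ⊗_R N) ≥ min{n, depth_R(N)}. -/

import Mathlib

/-!
Write `T = Tr M` and `k` for the residue field. The presentation `F → G → M → 0` dualizes to
`0 → K → G* → F* → T → 0`, so that `K = ker (G* → F*)` is a second syzygy of `T`. Under the
natural isomorphism `G ⊗ N ≅ Hom(G*, N)` (`tensorEquivHomDual`), restriction to `K` becomes a map
`G ⊗ N → Hom(K, N)` whose kernel is the image of `F ⊗ N` as soon as `Ext^1(T, N) = 0`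
(`ker_tensorToHomSyzygy`). Hence `M ⊗ N` embeds in `Hom(K, N)`, and the embedding is an
isomorphism if moreover `Ext^2(T, N) = 0`.

It remains to bound the depth of `Hom(K, N)`, where `Ext^i(K, N) = Ext^(i+2)(T, N) = 0` for
`1 ≤ i ≤ n - 2`. By `ExtVanish.hom`, `Ext^j(k, Hom(K, N)) = 0` whenever `Ext^i(K, N) = 0` for
`1 ≤ i < j` and `Ext^i(k, N) = 0` for `i ≤ j`; this is an induction on `j` along the exact sequence
`0 → Hom(K, N) → Hom(P, N) → Hom(K', N)`, with `P` finite free and `K'` the syzygy of `K`.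

The statement uses `Ext` as a left derived functor, while the long exact sequences are available
for `Ext` in the derived category; both are computed by a projective resolution, so they vanish
simultaneously (`subsingleton_ExtM_iff`).
-/

open CategoryTheory TensorProduct

/-- The Ext group `Ext^i_R(M,N)` as a type. -/
noncomputable def ExtM (R : Type) [CommRing R] (M N : Type) [AddCommGroup M] [Module R M]
    [AddCommGroup N] [Module R N] (i : ℕ) : Type :=
  ((Ext R (ModuleCat R) i).obj (Opposite.op (ModuleCat.of R M))).obj (ModuleCat.of R N)


noncomputable instance (R : Type) [CommRing R] (M N : Type) [AddCommGroup M] [Module R M]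
    [AddCommGroup N] [Module R N] (i : ℕ) : AddCommGroup (ExtM R M N i) :=
  inferInstanceAs (AddCommGroup
    (((Ext R (ModuleCat R) i).obj (Opposite.op (ModuleCat.of R M))).obj (ModuleCat.of R N)))

noncomputable instance (R : Type) [CommRing R] (M N : Type) [AddCommGroup M] [Module R M]
    [AddCommGroup N] [Module R N] (i : ℕ) : Module R (ExtM R M N i) :=
  inferInstanceAs (Module R
    (((Ext R (ModuleCat R) i).obj (Opposite.op (ModuleCat.of R M))).obj (ModuleCat.of R N)))

/-- The Tor group `Tor_i^R(M,N)` as a type. -/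
noncomputable def TorM (R : Type) [CommRing R] (M N : Type) [AddCommGroup M] [Module R M]
    [AddCommGroup N] [Module R N] (i : ℕ) : Type :=
  ((Tor (ModuleCat R) i).obj (ModuleCat.of R M)).obj (ModuleCat.of R N)

noncomputable instance (R : Type) [CommRing R] (M N : Type) [AddCommGroup M] [Module R M]
    [AddCommGroup N] [Module R N] (i : ℕ) : AddCommGroup (TorM R M N i) :=
  inferInstanceAs (AddCommGroup
    (((Tor (ModuleCat R) i).obj (ModuleCat.of R M)).obj (ModuleCat.of R N)))

noncomputable instance (R : Type) [CommRing R] (M N : Type) [AddCommGroup M] [Module R M]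
    [AddCommGroup N] [Module R N] (i : ℕ) : Module R (TorM R M N i) :=
  inferInstanceAs (Module R
    (((Tor (ModuleCat R) i).obj (ModuleCat.of R M)).obj (ModuleCat.of R N)))

/-- The depth of a module over a local ring, via Rees' theorem:
`depth M = inf { i | Ext^i(k, M) ≠ 0 }` (so the zero module has depth `⊤`). -/
noncomputable def depthM (R : Type) [CommRing R] [IsLocalRing R] (M : Type) [AddCommGroup M]
    [Module R M] : ℕ∞ :=
  sInf {i : ℕ∞ | ∃ n : ℕ, i = n ∧ ¬ Subsingleton (ExtM R (IsLocalRing.ResidueField R) M n)}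

/-- A maximal Cohen-Macaulay module: a nonzero finitely generated module whose
depth equals the Krull dimension of the ring. -/
def IsMCM (R : Type) [CommRing R] [IsLocalRing R] (M : Type) [AddCommGroup M] [Module R M] :
    Prop :=
  Nontrivial M ∧ Module.Finite R M ∧ (depthM R M : WithBot ℕ∞) = ringKrullDim R

/-- A regular local ring: a Noetherian local ring whose maximal ideal is generated by a
regular sequence. -/
def IsRegularLocal (S : Type) [CommRing S] [IsLocalRing S] : Prop :=
  IsNoetherianRing S ∧ ∃ xs : List S, RingTheory.Sequence.IsRegular S xs ∧
    Ideal.span {x | x ∈ xs} = IsLocalRing.maximalIdeal S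

/-! ### Comparison of the two definitions of `Ext` -/

/-- `Ext^(i+1)(X, N)` vanishes exactly when every cocycle `P_(i+1) → N` of a projective resolution
`P` of `X` is a coboundary. -/
theorem subsingleton_ExtM_succ_iff {R : Type} [CommRing R] {X N : Type} [AddCommGroup X]
    [Module R X] [AddCommGroup N] [Module R N] (P : ProjectiveResolution (ModuleCat.of R X))
    (i : ℕ) :
    Subsingleton (ExtM R X N (i + 1)) ↔
      ∀ f : P.complex.X (i + 1) ⟶ ModuleCat.of R N, P.complex.d (i + 2) (i + 1) ≫ f = 0 →
        ∃ g : P.complex.X i ⟶ ModuleCat.of R N, P.complex.d (i + 1) i ≫ g = f := by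
  have h : Subsingleton (ExtM R X N (i + 1)) ↔
      Limits.IsZero (((Ext R (ModuleCat R) (i + 1)).obj
        (Opposite.op (ModuleCat.of R X))).obj (ModuleCat.of R N)) :=
    ModuleCat.isZero_iff_subsingleton.symm
  rw [h, (P.isoExt (R := R) (i + 1) (ModuleCat.of R N)).isZero_iff,
    ← HomologicalComplex.exactAt_iff_isZero_homology,
    HomologicalComplex.exactAt_iff' _ i (i + 1) (i + 2) (by simp) (by simp),
    ShortComplex.moduleCat_exact_iff]
  rfl

theorem subsingleton_ExtM_zero_iff {R : Type} [CommRing R] {X N : Type} [AddCommGroup X]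
    [Module R X] [AddCommGroup N] [Module R N] :
    Subsingleton (ExtM R X N 0) ↔ Subsingleton (ModuleCat.of R X ⟶ ModuleCat.of R N) := by
  let P : ProjectiveResolution (ModuleCat.of R X) := projectiveResolution _
  have h : Subsingleton (ExtM R X N 0) ↔
      Limits.IsZero (((Ext R (ModuleCat R) 0).obj
        (Opposite.op (ModuleCat.of R X))).obj (ModuleCat.of R N)) :=
    ModuleCat.isZero_iff_subsingleton.symm
  rw [h, (P.isoExt (R := R) 0 (ModuleCat.of R N)).isZero_iff,
    ← HomologicalComplex.exactAt_iff_isZero_homology,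
    HomologicalComplex.exactAt_iff' _ 0 0 1 (by simp) (by simp),
    ShortComplex.moduleCat_exact_iff]
  have h2 : (∀ f : P.complex.X 0 ⟶ ModuleCat.of R N, P.complex.d 1 0 ≫ f = 0 →
        ∃ g : P.complex.X 0 ⟶ ModuleCat.of R N, P.complex.d 0 0 ≫ g = f) ↔
      Subsingleton (ModuleCat.of R X ⟶ ModuleCat.of R N) := by
    let π : P.complex.X 0 ⟶ ModuleCat.of R X := P.π.f 0
    have hπ : P.complex.d 1 0 ≫ π = 0 := P.complex_d_comp_π_f_zero
    have : Epi π := inferInstanceAs (Epi (P.π.f 0))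
    constructor
    · intro H
      refine subsingleton_of_forall_eq 0 fun f ↦ ?_
      obtain ⟨g, hg⟩ := H (π ≫ f) (by rw [← Category.assoc, hπ, Limits.zero_comp])
      rw [P.complex.shape 0 0 (by simp), Limits.zero_comp] at hg
      exact (cancel_epi π).1 (by rw [← hg, Limits.comp_zero])
    · intro H f hf
      let g : ModuleCat.of R X ⟶ ModuleCat.of R N := P.isColimitCokernelCofork.desc
        (Limits.CokernelCofork.ofπ f hf)
      have hg : π ≫ g = f := P.isColimitCokernelCofork.fac
        (Limits.CokernelCofork.ofπ f hf) Limits.WalkingParallelPair.one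
      exact ⟨0, by rw [← hg, Subsingleton.elim g 0, Limits.comp_zero, Limits.comp_zero]⟩
  exact h2

/-- The left-derived-functor `Ext` vanishes exactly when the derived-category `Ext` does. -/
theorem subsingleton_ExtM_iff {R : Type} [CommRing R] {X N : Type} [AddCommGroup X]
    [Module R X] [AddCommGroup N] [Module R N] (i : ℕ) :
    Subsingleton (ExtM R X N i) ↔
      Subsingleton (Abelian.Ext.{0} (ModuleCat.of R X) (ModuleCat.of R N) i) := by
  cases i with
  | zero =>
    rw [subsingleton_ExtM_zero_iff]
    exact Abelian.Ext.addEquiv₀.toEquiv.subsingleton_congr.symm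
  | succ i =>
    let P : ProjectiveResolution (ModuleCat.of R X) := projectiveResolution _
    rw [subsingleton_ExtM_succ_iff P]
    constructor
    · intro H
      refine subsingleton_of_forall_eq 0 fun α ↦ ?_
      obtain ⟨f, hf, rfl⟩ := P.extMk_surjective α (i + 2) rfl
      exact (P.extMk_eq_zero_iff f (i + 2) rfl hf i rfl).2 (H f hf)
    · intro H f hf
      exact (P.extMk_eq_zero_iff f (i + 2) rfl hf i rfl).1 (Subsingleton.elim _ _)

/-! ### Long exact sequences and the depth of `Hom(K, N)` -/

section ExtVanishing

variable {R : Type} [CommRing R]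

/-- Vanishing of `Ext^i_R(X, N)`, with `Ext` computed in the derived category. -/
def ExtVanish (R : Type) [CommRing R] (X N : Type) [AddCommGroup X] [Module R X]
    [AddCommGroup N] [Module R N] (i : ℕ) : Prop :=
  Subsingleton (Abelian.Ext.{0} (ModuleCat.of R X) (ModuleCat.of R N) i)

variable {X N A B C : Type} [AddCommGroup X] [Module R X] [AddCommGroup N] [Module R N]
  [AddCommGroup A] [Module R A] [AddCommGroup B] [Module R B] [AddCommGroup C] [Module R C]

theorem ExtVanish.of_linearEquiv {i : ℕ} (e : A ≃ₗ[R] B) (h : ExtVanish R X A i) :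
    ExtVanish R X B i := by
  unfold ExtVanish at *
  refine subsingleton_of_forall_eq 0 fun x ↦ ?_
  rw [← Abelian.Ext.comp_mk₀_id x, ← e.toModuleIso.inv_hom_id, ← Abelian.Ext.mk₀_comp_mk₀,
    ← Abelian.Ext.comp_assoc_of_third_deg_zero,
    Subsingleton.elim (x.comp (Abelian.Ext.mk₀ e.toModuleIso.inv) (add_zero i)) 0,
    Abelian.Ext.zero_comp]

theorem ExtVanish.of_injective (f : A →ₗ[R] B) (hf : Function.Injective f)
    (h : ExtVanish R X B 0) : ExtVanish R X A 0 := by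
  unfold ExtVanish at *
  have : Mono (ModuleCat.ofHom f) := (ModuleCat.mono_iff_injective _).2 hf
  exact (Abelian.Ext.postcomp_mk₀_injective_of_mono (ModuleCat.of R X)
    (ModuleCat.ofHom f)).subsingleton

theorem ExtVanish.pi {i : ℕ} (r : ℕ) (h : ExtVanish R X N i) :
    ExtVanish R X (Fin r → N) i := by
  unfold ExtVanish at *
  refine subsingleton_of_forall_eq 0 fun x ↦ ?_
  have hid : 𝟙 (ModuleCat.of R (Fin r → N)) =
      ∑ k : Fin r, ModuleCat.ofHom (LinearMap.proj (R := R) (φ := fun _ : Fin r ↦ N) k) ≫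
        ModuleCat.ofHom (LinearMap.single R (fun _ : Fin r ↦ N) k) := by
    refine ModuleCat.hom_ext (LinearMap.ext fun v ↦ ?_)
    simp only [ModuleCat.hom_id, ModuleCat.hom_sum, ModuleCat.hom_comp, ModuleCat.hom_ofHom,
      LinearMap.sum_apply, LinearMap.comp_apply, LinearMap.id_apply]
    exact (LinearMap.sum_single_apply (φ := fun _ : Fin r ↦ N) v).symm
  rw [← Abelian.Ext.comp_mk₀_id x, hid, Abelian.Ext.mk₀_sum, Abelian.Ext.comp_sum]
  refine Finset.sum_eq_zero fun k _ ↦ ?_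
  rw [← Abelian.Ext.mk₀_comp_mk₀, ← Abelian.Ext.comp_assoc_of_third_deg_zero,
    Subsingleton.elim (x.comp (Abelian.Ext.mk₀ (ModuleCat.ofHom _)) (add_zero i)) 0,
    Abelian.Ext.zero_comp]

/-- The short exact sequence `0 → A → B → C → 0` of modules as one of objects of `ModuleCat`. -/
theorem shortExact_ofHom (f : A →ₗ[R] B) (g : B →ₗ[R] C) (hf : Function.Injective f)
    (hfg : Function.Exact f g) (hg : Function.Surjective g) :
    (ShortComplex.mk (ModuleCat.ofHom f) (ModuleCat.ofHom g)
      (by ext x; exact hfg.apply_apply_eq_zero x)).ShortExact :=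
  ModuleCat.shortComplex_shortExact _ hfg hf hg

theorem ExtVanish.covariant {j : ℕ} (f : A →ₗ[R] B) (g : B →ₗ[R] C) (hf : Function.Injective f)
    (hfg : Function.Exact f g) (hg : Function.Surjective g) (hB : ExtVanish R X B (j + 1))
    (hC : ExtVanish R X C j) : ExtVanish R X A (j + 1) := by
  unfold ExtVanish at *
  refine subsingleton_of_forall_eq 0 fun x ↦ ?_
  obtain ⟨y, rfl⟩ := Abelian.Ext.covariant_sequence_exact₁ (ModuleCat.of R X)
    (shortExact_ofHom f g hf hfg hg) x (hB.elim _ _) rfl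
  rw [hC.elim y 0, Abelian.Ext.zero_comp]

theorem ExtVanish.of_projective [Module.Projective R X] (i : ℕ) : ExtVanish R X N (i + 1) :=
  have : Projective (ModuleCat.of R X) := (IsProjective.iff_projective X).1 inferInstance
  subsingleton_of_forall_eq 0 Abelian.Ext.eq_zero_of_projective

/-- Dimension shifting along `0 → A → B → C → 0` with `B` projective. -/
theorem ExtVanish.shift {i : ℕ} [Module.Projective R B] (f : A →ₗ[R] B) (g : B →ₗ[R] C)
    (hf : Function.Injective f) (hfg : Function.Exact f g) (hg : Function.Surjective g)
    (hC : ExtVanish R C N (i + 2)) : ExtVanish R A N (i + 1) := by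
  have hB : ExtVanish R B N (i + 1) := .of_projective i
  unfold ExtVanish at *
  refine subsingleton_of_forall_eq 0 fun x ↦ ?_
  obtain ⟨y, rfl⟩ := Abelian.Ext.contravariant_sequence_exact₁
    (shortExact_ofHom f g hf hfg hg) (ModuleCat.of R N) x (n₁ := i + 2) (by lia) (hC.elim _ _)
  rw [hB.elim y 0, Abelian.Ext.comp_zero]

/-- If `Ext^1(C, N) = 0`, maps to `N` extend along `A → B` for `0 → A → B → C → 0` exact. -/
theorem ExtVanish.exists_extension (f : A →ₗ[R] B) (g : B →ₗ[R] C)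
    (hf : Function.Injective f) (hfg : Function.Exact f g) (hg : Function.Surjective g)
    (hC : ExtVanish R C N 1) (φ : A →ₗ[R] N) : ∃ ψ : B →ₗ[R] N, ψ ∘ₗ f = φ := by
  unfold ExtVanish at *
  obtain ⟨y, hy⟩ := Abelian.Ext.contravariant_sequence_exact₁
    (shortExact_ofHom f g hf hfg hg) (ModuleCat.of R N)
    (Abelian.Ext.mk₀ (ModuleCat.ofHom φ)) (n₁ := 1) rfl (hC.elim _ _)
  obtain ⟨ψ, rfl⟩ := (Abelian.Ext.mk₀_bijective _ _).2 y
  rw [Abelian.Ext.mk₀_comp_mk₀] at hy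
  have := (Abelian.Ext.mk₀_bijective _ _).1 hy
  exact ⟨ψ.hom, congrArg ModuleCat.Hom.hom this⟩

theorem ExtVanish.hom_of_free {i r : ℕ} (h : ExtVanish R X N i) :
    ExtVanish R X ((Fin r → R) →ₗ[R] N) i :=
  (h.pi r).of_linearEquiv ((Pi.basisFun R (Fin r)).constr R)

/-- If `Ext^i(K, N) = 0` for `1 ≤ i < j` and `Ext^i(X, N) = 0` for `i ≤ j`, then
`Ext^j(X, Hom(K, N)) = 0`. The induction replaces `K` by its syzygy `K'`, through the exact
sequence `0 → Hom(K, N) → Hom(F, N) → Hom(K', N)` with `F` free. -/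
theorem ExtVanish.hom [IsNoetherianRing R] (j : ℕ) :
    ∀ (K : Type) [AddCommGroup K] [Module R K] [Module.Finite R K],
      (∀ i, 1 ≤ i → i < j → ExtVanish R K N i) → (∀ i ≤ j, ExtVanish R X N i) →
      ExtVanish R X (K →ₗ[R] N) j := by
  induction j with
  | zero =>
    intro K _ _ _ _ hN
    obtain ⟨r, p, hp⟩ := Module.Finite.exists_fin' R K
    exact (hN 0 le_rfl).hom_of_free.of_injective (LinearMap.lcomp R N p)
      (LinearMap.lcomp_injective_of_surjective p hp)
  | succ j ih =>
    intro K _ _ _ hK hN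
    obtain ⟨r, p, hp⟩ := Module.Finite.exists_fin' R K
    let ι := (LinearMap.ker p).subtype
    have hι : Function.Injective ι := Subtype.val_injective
    have hex : Function.Exact ι p := LinearMap.exact_subtype_ker_map p
    let res : ((Fin r → R) →ₗ[R] N) →ₗ[R] (LinearMap.ker p →ₗ[R] N) := LinearMap.lcomp R N ι
    have hC : ExtVanish R X (LinearMap.range res) j := by
      have hhom : ExtVanish R X (LinearMap.ker p →ₗ[R] N) j := by
        refine ih _ (fun i hi hij ↦ ?_) fun i hi ↦ hN i (by lia)
        obtain ⟨i, rfl⟩ := Nat.exists_eq_add_of_le' hi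
        exact (hK (i + 2) (by lia) (by lia)).shift ι p hι hex hp
      rcases Nat.eq_zero_or_pos j with rfl | hj
      · exact hhom.of_injective _ (LinearMap.range res).injective_subtype
      · have htop : LinearMap.range res = ⊤ := LinearMap.range_eq_top.2 fun φ ↦
          (hK 1 le_rfl (by lia)).exists_extension ι p hι hex hp φ
        rw [htop]
        exact hhom.of_linearEquiv Submodule.topEquiv.symm
    refine ExtVanish.covariant (LinearMap.lcomp R N p) res.rangeRestrict
      (LinearMap.lcomp_injective_of_surjective p hp) ?_ res.surjective_rangeRestrict
      (hN (j + 1) le_rfl).hom_of_free hC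
    have := LinearMap.exact_lcomp_of_exact_of_surjective N hex hp
    intro φ
    rw [← this φ, ← LinearMap.mem_ker, LinearMap.ker_rangeRestrict, LinearMap.mem_ker]

/-- A map `g : A → N` vanishing on the kernel of `D : A → B` descends to the image of `D`, and
then extends to `B` when `Ext^1(coker D, N) = 0`. -/
theorem ExtVanish.exists_factor (D : A →ₗ[R] B)
    (h1 : ExtVanish R (B ⧸ LinearMap.range D) N 1) (g : A →ₗ[R] N)
    (hg : g ∘ₗ (LinearMap.ker D).subtype = 0) : ∃ ψ : B →ₗ[R] N, ψ ∘ₗ D = g := by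
  have hle : LinearMap.ker D ≤ LinearMap.ker g := fun y hy ↦ LinearMap.congr_fun hg ⟨y, hy⟩
  let φ : LinearMap.range D →ₗ[R] N :=
    (LinearMap.ker D).liftQ g hle ∘ₗ D.quotKerEquivRange.symm.toLinearMap
  have hφ : φ ∘ₗ D.rangeRestrict = g := by
    ext y
    have : D.quotKerEquivRange.symm (D.rangeRestrict y) = Submodule.Quotient.mk y := by
      rw [LinearEquiv.symm_apply_eq]
      rfl
    simp only [φ, LinearMap.comp_apply, LinearEquiv.coe_coe, this, Submodule.liftQ_apply]
  obtain ⟨ψ, hψ⟩ := h1.exists_extension (LinearMap.range D).subtype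
    (LinearMap.range D).mkQ (Submodule.injective_subtype _)
    (LinearMap.exact_subtype_mkQ _) (Submodule.mkQ_surjective _) φ
  refine ⟨ψ, ?_⟩
  rw [← hφ, ← hψ]
  rfl

/-- `im D` is a syzygy of `coker D`. -/
theorem ExtVanish.range_of_coker [Module.Projective R B] (D : A →ₗ[R] B) {i : ℕ}
    (h : ExtVanish R (B ⧸ LinearMap.range D) N (i + 2)) :
    ExtVanish R (LinearMap.range D) N (i + 1) :=
  h.shift (LinearMap.range D).subtype (LinearMap.range D).mkQ (Submodule.injective_subtype _)
    (LinearMap.exact_subtype_mkQ _) (Submodule.mkQ_surjective _)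

theorem exact_ker_rangeRestrict (D : A →ₗ[R] B) :
    Function.Exact (LinearMap.ker D).subtype D.rangeRestrict := by
  rw [LinearMap.exact_iff, LinearMap.ker_rangeRestrict, Submodule.range_subtype]

/-- `ker D` is a second syzygy of `coker D`. -/
theorem ExtVanish.ker_of_coker [Module.Projective R A] [Module.Projective R B] (D : A →ₗ[R] B)
    {i : ℕ} (h : ExtVanish R (B ⧸ LinearMap.range D) N (i + 3)) :
    ExtVanish R (LinearMap.ker D) N (i + 1) :=
  (h.range_of_coker D).shift (LinearMap.ker D).subtype D.rangeRestrict
    (Submodule.injective_subtype _) (exact_ker_rangeRestrict D) D.surjective_rangeRestrict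

theorem ExtVanish.exists_extension_ker [Module.Projective R B] (D : A →ₗ[R] B)
    (h : ExtVanish R (B ⧸ LinearMap.range D) N 2) (φ : LinearMap.ker D →ₗ[R] N) :
    ∃ ψ : A →ₗ[R] N, ψ ∘ₗ (LinearMap.ker D).subtype = φ :=
  (h.range_of_coker D).exists_extension (LinearMap.ker D).subtype D.rangeRestrict
    (Submodule.injective_subtype _) (exact_ker_rangeRestrict D) D.surjective_rangeRestrict φ

/-- For `D : A → B` with `A`, `B` finite projective and `K = ker D` the second syzygy of
`coker D`, the image of the restriction map `Hom(A, N) → Hom(K, N)` satisfies the depth estimate: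
it embeds in `Hom(K, N)`, which settles `j = 0`, and equals `Hom(K, N)` when
`Ext^2(coker D, N) = 0`. The isomorphism `e` allows
`Hom(A, N)` to be presented as another module, later `G ⊗ N`. -/
theorem ExtVanish.range_restrict_ker [IsNoetherianRing R] [Module.Projective R A]
    [Module.Finite R A] [Module.Projective R B] (D : A →ₗ[R] B) (e : C ≃ₗ[R] (A →ₗ[R] N))
    (n : ℕ) (h1 : ∀ i, 1 ≤ i → i ≤ n → ExtVanish R (B ⧸ LinearMap.range D) N i)
    (j : ℕ) (hj : j < n) (hN : ∀ i ≤ j, ExtVanish R X N i) :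
    ExtVanish R X (LinearMap.range
      (LinearMap.lcomp R N (LinearMap.ker D).subtype ∘ₗ e.toLinearMap)) j := by
  have hhom : ExtVanish R X (LinearMap.ker D →ₗ[R] N) j := by
    refine ExtVanish.hom j _ (fun i hi hij ↦ ?_) hN
    obtain ⟨i, rfl⟩ := Nat.exists_eq_add_of_le' hi
    exact (h1 (i + 3) (by lia) (by lia)).ker_of_coker D
  rcases Nat.eq_zero_or_pos j with rfl | hj0
  · exact hhom.of_injective _ (Submodule.injective_subtype _)
  · have htop : LinearMap.range
        (LinearMap.lcomp R N (LinearMap.ker D).subtype ∘ₗ e.toLinearMap) = ⊤ :=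
      LinearMap.range_eq_top.2 fun φ ↦ by
        obtain ⟨ψ, hψ⟩ := (h1 2 (by lia) (by lia)).exists_extension_ker D φ
        refine ⟨e.symm ψ, ?_⟩
        change e (e.symm ψ) ∘ₗ _ = φ
        rw [LinearEquiv.apply_symm_apply]
        exact hψ
    rw [htop]
    exact hhom.of_linearEquiv Submodule.topEquiv.symm

end ExtVanishing

/-! ### The Auslander transpose and `M ⊗ N` -/

section Transpose

variable {R : Type} [CommRing R] (N : Type) [AddCommGroup N] [Module R N]

/-- The natural isomorphism `F ⊗ N ≅ Hom(F*, N)`, `y ⊗ n ↦ (φ ↦ φ(y) • n)`, for `F` finite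
free. -/
noncomputable def tensorEquivHomDual (F : Type) [AddCommGroup F] [Module R F] [Module.Free R F]
    [Module.Finite R F] : F ⊗[R] N ≃ₗ[R] (Module.Dual R F →ₗ[R] N) :=
  (Module.evalEquiv R F).rTensor N ≪≫ₗ dualTensorHomEquiv R (Module.Dual R F) N

theorem tensorEquivHomDual_rTensor {F G : Type} [AddCommGroup F] [Module R F] [Module.Free R F]
    [Module.Finite R F] [AddCommGroup G] [Module R G] [Module.Free R G] [Module.Finite R G]
    (d : F →ₗ[R] G) (z : F ⊗[R] N) :
    tensorEquivHomDual N G (d.rTensor N z) = tensorEquivHomDual N F z ∘ₗ d.dualMap := by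
  induction z with
  | zero => simp
  | add x y hx hy => simp only [map_add, hx, hy, LinearMap.add_comp]
  | tmul y n =>
    ext φ
    simp [tensorEquivHomDual]

/-- For a finite free presentation `F → G → M → 0` with transpose `T = coker(G* → F*)`, and
`K = ker(G* → F*)` the second syzygy of `T`: if `Ext^1(T, N) = 0` then the natural map
`G ⊗ N ≅ Hom(G*, N) → Hom(K, N)` has kernel the image of `F ⊗ N`. -/
theorem ker_tensorToHomSyzygy {F G : Type} [AddCommGroup F] [Module R F] [Module.Free R F]
    [Module.Finite R F] [AddCommGroup G] [Module R G] [Module.Free R G] [Module.Finite R G]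
    (d : F →ₗ[R] G) (h1 : ExtVanish R (Module.Dual R F ⧸ LinearMap.range d.dualMap) N 1) :
    LinearMap.ker (LinearMap.lcomp R N (LinearMap.ker d.dualMap).subtype ∘ₗ
      (tensorEquivHomDual N G).toLinearMap) = LinearMap.range (d.rTensor N) := by
  ext z
  constructor
  · intro hz
    have hz' : tensorEquivHomDual N G z ∘ₗ (LinearMap.ker d.dualMap).subtype = 0 := hz
    obtain ⟨ψ, hψ⟩ := h1.exists_factor d.dualMap _ hz'
    refine ⟨(tensorEquivHomDual N F).symm ψ, (tensorEquivHomDual N G).injective ?_⟩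
    rw [tensorEquivHomDual_rTensor, LinearEquiv.apply_symm_apply, hψ]
  · rintro ⟨z, rfl⟩
    change tensorEquivHomDual N G (d.rTensor N z) ∘ₗ (LinearMap.ker d.dualMap).subtype = 0
    rw [tensorEquivHomDual_rTensor]
    ext y
    have hy : d.dualMap y.1 = 0 := y.2
    simp [LinearMap.comp_apply, hy]

/-- If `Ext^i(Tr M, N) = 0` for `1 ≤ i ≤ n`, then `Ext^j(X, M ⊗ N)` vanishes for every `j < n`
such that `Ext^i(X, N) = 0` for all `i ≤ j`. -/
theorem ExtVanish.tensor [IsNoetherianRing R] {X M F G : Type} [AddCommGroup X] [Module R X]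
    [AddCommGroup M] [Module R M] [AddCommGroup F] [Module R F] [Module.Free R F]
    [Module.Finite R F] [AddCommGroup G] [Module R G] [Module.Free R G] [Module.Finite R G]
    (d : F →ₗ[R] G) (ε : G →ₗ[R] M) (hsurj : Function.Surjective ε)
    (hker : LinearMap.ker ε = LinearMap.range d) (n : ℕ)
    (h1 : ∀ i, 1 ≤ i → i ≤ n →
      ExtVanish R (Module.Dual R F ⧸ LinearMap.range d.dualMap) N i)
    (j : ℕ) (hj : j < n) (hN : ∀ i ≤ j, ExtVanish R X N i) :
    ExtVanish R X (M ⊗[R] N) j := by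
  let Φ : G ⊗[R] N →ₗ[R] (LinearMap.ker d.dualMap →ₗ[R] N) :=
    LinearMap.lcomp R N (LinearMap.ker d.dualMap).subtype ∘ₗ
      (tensorEquivHomDual N G).toLinearMap
  have hΦ : LinearMap.ker Φ = LinearMap.range (d.rTensor N) :=
    ker_tensorToHomSyzygy N d (h1 1 le_rfl (by lia))
  have hT : LinearMap.ker (ε.rTensor N) = LinearMap.range (d.rTensor N) :=
    LinearMap.exact_iff.1 (rTensor_exact N (LinearMap.exact_iff.2 hker) hsurj)
  let e : LinearMap.range Φ ≃ₗ[R] M ⊗[R] N :=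
    Φ.quotKerEquivRange.symm ≪≫ₗ Submodule.quotEquivOfEq _ _ (hΦ.trans hT.symm) ≪≫ₗ
      (ε.rTensor N).quotKerEquivOfSurjective (LinearMap.rTensor_surjective N hsurj)
  exact ExtVanish.of_linearEquiv e
    (ExtVanish.range_restrict_ker d.dualMap (tensorEquivHomDual N G) n h1 j hj hN)

end Transpose

/-- Let `R` be a commutative Noetherian local ring, `M`, `N` finitely
generated modules, `n ≥ 1`. Given any finite free presentation
`F₁ = R^b → F₀ = R^a → M → 0`, with Auslander transpose
`Tr M = coker(Hom(F₀,R) → Hom(F₁,R))`: if `Ext^i(Tr M, N) = 0` for `i = 1, …, n`,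
then `depth (M ⊗ N) ≥ min {n, depth N}`. -/
theorem stmt9 (R : Type) [CommRing R] [IsLocalRing R] [IsNoetherianRing R]
    (M N : Type) [AddCommGroup M] [Module R M] [AddCommGroup N] [Module R N]
    [Module.Finite R M] [Module.Finite R N]
    (n : ℕ) (hn : 1 ≤ n)
    (a b : ℕ) (d : (Fin b → R) →ₗ[R] (Fin a → R)) (ε : (Fin a → R) →ₗ[R] M)
    (hsurj : Function.Surjective ε) (hker : LinearMap.ker ε = LinearMap.range d)
    (h1 : ∀ i : ℕ, 1 ≤ i → i ≤ n → Subsingleton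
      (ExtM R (Module.Dual R (Fin b → R) ⧸ LinearMap.range d.dualMap) N i)) :
    min (n : ℕ∞) (depthM R N) ≤ depthM R (M ⊗[R] N) := by
  refine le_sInf ?_
  rintro _ ⟨j, rfl, hj⟩
  by_contra! hlt
  obtain ⟨hjn, hjN⟩ := lt_min_iff.1 hlt
  refine hj ((subsingleton_ExtM_iff j).2 ?_)
  refine ExtVanish.tensor N d ε hsurj hker n
    (fun i hi hin ↦ (subsingleton_ExtM_iff i).1 (h1 i hi hin)) j (by exact_mod_cast hjn)
    fun i hij ↦ (subsingleton_ExtM_iff i).1 ?_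
  by_contra hi
  have hle : depthM R N ≤ (i : ℕ∞) := sInf_le ⟨i, rfl, hi⟩
  have hij' : (i : ℕ∞) ≤ j := by exact_mod_cast hij
  exact absurd (hle.trans hij') (not_le.2 hjN)
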